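/- arXiv:2011.13171 — 3 statements merged into one kernel-verified Lean document; each statement's English description precedes it below -/
import Mathlib

section
/- There exists a tossing process T : (ℕ → Bool) → (ℕ → Bool) (measurable and measure-preserving for the fair-coin measure μ) such that for every set D ⊆ (ℕ → Bool) whose complement is μ-null, T is not continuous on D (with respect to the product topology). Consequently T is not equal μ-almost everywhere to any continuous partial tossing process. -/
open MeasureTheory

/-- The uniform Bernoulli(1/2) ("fair coin") measure on `Bool`. -/
noncomputable def coin : Measure Bool := (PMF.bernoulli 2⁻¹ (by norm_num)).toMeasure

/-- `μ` is the fair-coin measure on Cantor space: the product over `ℕ` of uniform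
Bernoulli(1/2) measures, characterized by the fact that all finite-dimensional marginals
are finite products of `coin`. -/
def IsFairCoin (μ : Measure (ℕ → Bool)) : Prop :=
  IsProjectiveLimit μ (fun J : Finset ℕ => Measure.pi fun _ : J => coin)

/-!
Let `f` be a measure-preserving involution, such as the flip of all coordinates of Cantor space.
Take a dense open set `U` so small that `V = U ∪ f⁻¹(U)` cannot contain almost every point moved
by `f`, and let `T` be the identity on `V` and `f` off `V`. A map that agrees with `T` almost
everywhere and is continuous on a co-null set agrees with the identity on a dense subset of that
set, hence, by continuity, on all of it; but `T` agrees with `f` off `V`.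
-/

open Set Measure Filter
open scoped ENNReal

section Topology

variable {X Y : Type*} [TopologicalSpace X] [MeasurableSpace X] [TopologicalSpace Y] [T2Space Y]

theorem exists_isOpen_dense_measure_lt [TopologicalSpace.SeparableSpace X] (μ : Measure X)
    [NullSingletonClass μ] [OuterRegular μ] {ε : ℝ≥0∞} (hε : ε ≠ 0) :
    ∃ U : Set X, IsOpen U ∧ Dense U ∧ μ U < ε := by
  obtain ⟨Q, hQ_countable, hQ_dense⟩ := TopologicalSpace.exists_countable_dense X
  obtain ⟨U, hQU, hU_open, hUε⟩ :=
    Q.exists_isOpen_lt_of_lt ε (by rwa [hQ_countable.measure_zero μ, pos_iff_ne_zero])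
  exact ⟨U, hU_open, hQ_dense.mono hQU, hUε⟩

theorem ae_eq_of_eqOn_isOpen_dense {μ : Measure X} [IsOpenPosMeasure μ] {f f' g : X → Y}
    {U D : Set X} (hU : IsOpen U) (hU_dense : Dense U) (hfg : EqOn f g U) (hff' : f' =ᵐ[μ] f)
    (hD : D ∈ ae μ) (hf' : ContinuousOn f' D) (hg : Continuous g) : f' =ᵐ[μ] g := by
  set E := D ∩ {x | f' x = f x}
  have hE : E ∈ ae μ := inter_mem hD hff'
  have hEU_dense : Dense (E ∩ U) := (dense_of_ae hE).inter_of_isOpen_right hU_dense hU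
  have hEU_eqOn : EqOn f' g (E ∩ U) := fun x hx => hx.1.2.trans (hfg hx.2)
  exact mem_of_superset hD <| hEU_eqOn.of_subset_closure hf' hg.continuousOn
    (fun _ hx => hx.1.1) (fun x _ => hEU_dense x)

end Topology

section MeasurePreserving

variable {α β : Type*} [MeasurableSpace α] [MeasurableSpace β] {μ : Measure α} {ν : Measure β}

theorem measurePreserving_piecewise {f g : α → β} (hf : MeasurePreserving f μ ν)
    (hg : MeasurePreserving g μ ν) {s : Set α} [DecidablePred (· ∈ s)] {t : Set β}
    (ht : MeasurableSet t) (hfs : f ⁻¹' t = s) (hgs : g ⁻¹' t = s) :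
    MeasurePreserving (s.piecewise f g) μ ν := by
  have hs : MeasurableSet s := hfs ▸ hf.measurable ht
  have h_meas : Measurable (s.piecewise f g) := hf.measurable.piecewise hs hg.measurable
  have h_on : MeasurePreserving (s.piecewise f g) (μ.restrict s) (ν.restrict t) :=
    (hfs ▸ hf.restrict_preimage ht).congr h_meas (piecewise_ae_eq_restrict hs).symm
  have hgs' : g ⁻¹' tᶜ = sᶜ := by rw [preimage_compl, hgs]
  have h_off : MeasurePreserving (s.piecewise f g) (μ.restrict sᶜ) (ν.restrict tᶜ) :=
    (hgs' ▸ hg.restrict_preimage ht.compl).congr h_meas (piecewise_ae_eq_restrict_compl hs).symm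
  simpa only [restrict_add_restrict_compl hs, restrict_add_restrict_compl ht]
    using h_on.add_measure h_off

theorem exists_dense_interior_preimage_eq_measure_lt [TopologicalSpace α] [OpensMeasurableSpace α]
    [TopologicalSpace.SeparableSpace α] [NullSingletonClass μ] [OuterRegular μ] {f : α → α}
    (hf : MeasurePreserving f μ μ) (hf_inv : f.Involutive) {ε : ℝ≥0∞} (hε : ε ≠ 0) :
    ∃ V : Set α, Dense (interior V) ∧ MeasurableSet V ∧ f ⁻¹' V = V ∧ μ V < ε := by
  obtain ⟨U, hU, hU_dense, hUε⟩ := exists_isOpen_dense_measure_lt μ (ENNReal.half_pos hε).ne'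
  refine ⟨U ∪ f ⁻¹' U, hU_dense.mono (interior_maximal subset_union_left hU),
    hU.measurableSet.union (hf.measurable hU.measurableSet), ?_, ?_⟩
  · rw [preimage_union, ← preimage_comp, hf_inv.comp_self, preimage_id, union_comm]
  · calc μ (U ∪ f ⁻¹' U) ≤ μ U + μ (f ⁻¹' U) := measure_union_le _ _
      _ = μ U + μ U := by rw [hf.measure_preimage hU.nullMeasurableSet]
      _ < ε / 2 + ε / 2 := ENNReal.add_lt_add hUε hUε
      _ = ε := ENNReal.add_halves ε

end MeasurePreserving

theorem stmt7_general {X : Type*} [TopologicalSpace X] [T2Space X]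
    [TopologicalSpace.SeparableSpace X] [MeasurableSpace X] [OpensMeasurableSpace X]
    {μ : Measure X} [NullSingletonClass μ] [OuterRegular μ] [IsOpenPosMeasure μ] {f : X → X}
    (hf : MeasurePreserving f μ μ) (hf_inv : f.Involutive) (hf_ne : ¬ f =ᵐ[μ] id) :
    ∃ T : X → X, MeasurePreserving T μ μ ∧
      ∀ T' : X → X, T' =ᵐ[μ] T → ∀ D ∈ ae μ, ¬ ContinuousOn T' D := by
  classical
  obtain ⟨V, hV_dense, hV, hV_inv, hV_lt⟩ :=
    exists_dense_interior_preimage_eq_measure_lt hf hf_inv (ε := μ {x | f x ≠ x}) hf_ne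
  have hT_interior : EqOn (V.piecewise id f) id (interior V) :=
    (piecewise_eqOn V id f).mono interior_subset
  refine ⟨V.piecewise id f, measurePreserving_piecewise (.id μ) hf hV rfl hV_inv,
    fun T' hT' D hD hcont => ?_⟩
  have hT'_id : T' =ᵐ[μ] id :=
    ae_eq_of_eqOn_isOpen_dense isOpen_interior hV_dense hT_interior hT' hD hcont continuous_id
  have h_moved : {x | f x ≠ x} ≤ᵐ[μ] V := by
    filter_upwards [hT'.symm.trans hT'_id] with x hx hfx
    by_contra hxV
    exact hfx (by rwa [piecewise_eq_of_notMem _ _ _ hxV] at hx)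
  exact (measure_mono_ae h_moved).not_gt hV_lt

section InfiniteProduct

variable {ι : Type*} {X Y : ι → Type*} [∀ i, MeasurableSpace (X i)] [∀ i, MeasurableSpace (Y i)]
  {μ : ∀ i, Measure (X i)} {ν : ∀ i, Measure (Y i)} [∀ i, IsProbabilityMeasure (μ i)]

theorem measurePreserving_infinitePi {f : ∀ i, X i → Y i}
    (hf : ∀ i, MeasurePreserving (f i) (μ i) (ν i)) :
    MeasurePreserving (fun x i => f i (x i)) (infinitePi μ) (infinitePi ν) where
  measurable := measurable_pi_lambda _ fun i => (hf i).measurable.comp (measurable_pi_apply i)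
  map_eq := by
    simp only [infinitePi_map_pi μ fun i => (hf i).measurable, (hf _).map_eq]

instance isOpenPosMeasure_infinitePi [∀ i, TopologicalSpace (X i)]
    [∀ i, OpensMeasurableSpace (X i)] [∀ i, IsOpenPosMeasure (μ i)] :
    IsOpenPosMeasure (infinitePi μ) where
  open_pos U hU := by
    rintro ⟨x, hx⟩ hU_null
    obtain ⟨s, u, hu, hsU⟩ := isOpen_pi_iff.1 hU x hx
    have h_prod : ∏ i ∈ s, μ i (u i) ≠ 0 :=
      Finset.prod_ne_zero_iff.2 fun i hi => (hu i hi).1.measure_ne_zero (μ i) ⟨x i, (hu i hi).2⟩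
    rw [← infinitePi_pi μ fun i hi => (hu i hi).1.measurableSet] at h_prod
    exact h_prod (measure_mono_null hsU hU_null)

theorem nullSingletonClass_infinitePi [Infinite ι] [∀ i, MeasurableSingletonClass (X i)] {c : ℝ≥0∞}
    (hc : c < 1) (hμ : ∀ i a, μ i {a} ≤ c) : NullSingletonClass (infinitePi μ) where
  measure_singleton x := by
    have h_le (n : ℕ) : infinitePi μ {x} ≤ c ^ n := by
      obtain ⟨s, rfl⟩ := Infinite.exists_subset_card_eq ι n
      calc infinitePi μ {x} ≤ infinitePi μ (Set.pi s fun i => {x i}) :=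
            measure_mono (singleton_subset_iff.2 fun _ _ => rfl)
        _ = ∏ i ∈ s, μ i {x i} := infinitePi_pi μ fun _ _ => measurableSet_singleton _
        _ ≤ c ^ s.card := Finset.prod_le_pow_card _ _ _ fun i _ => hμ i (x i)
    exact le_zero_iff.1 <|
      ge_of_tendsto' (ENNReal.tendsto_pow_atTop_nhds_zero_of_lt_one hc) h_le

end InfiniteProduct

theorem coin_singleton (b : Bool) : coin {b} = 2⁻¹ := by
  rw [coin, PMF.toMeasure_apply_singleton _ _ (measurableSet_singleton b)]
  cases b <;> simp [PMF.bernoulli]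

instance : IsProbabilityMeasure coin := by unfold coin; infer_instance

instance : IsOpenPosMeasure coin where
  open_pos U _ := by
    rintro ⟨b, hb⟩ hU
    have hb_null : coin {b} = 0 := measure_mono_null (singleton_subset_iff.2 hb) hU
    simp [coin_singleton] at hb_null

theorem measurePreserving_compl_coin : MeasurePreserving compl coin coin where
  measurable := .of_discrete
  map_eq := ext_of_singleton fun b => by
    have h_preimage : compl ⁻¹' {b} = {bᶜ} := by ext a; exact compl_eq_comm.trans eq_comm
    rw [map_apply .of_discrete (measurableSet_singleton b), h_preimage,
      coin_singleton, coin_singleton]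

instance : NullSingletonClass (infinitePi fun _ : ℕ => coin) :=
  nullSingletonClass_infinitePi ENNReal.one_half_lt_one fun _ b => (coin_singleton b).le

theorem IsFairCoin.eq_infinitePi {μ : Measure (ℕ → Bool)} (hμ : IsFairCoin μ) :
    μ = infinitePi fun _ => coin :=
  IsProjectiveLimit.unique hμ (isProjectiveLimit_infinitePi _)

/-- There is a tossing process `T` (measurable and measure-preserving for the fair-coin
measure) that is not continuous on any co-null set; consequently `T` is not equal
μ-almost everywhere to any continuous partial tossing process. -/
theorem stmt7 (μ : Measure (ℕ → Bool)) (hμ : IsFairCoin μ) :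
    ∃ T : (ℕ → Bool) → ℕ → Bool,
      Measurable T ∧
      (∀ A : Set (ℕ → Bool), MeasurableSet A → μ (T ⁻¹' A) = μ A) ∧
      (∀ D : Set (ℕ → Bool), μ Dᶜ = 0 → ¬ ContinuousOn T D) ∧
      ∀ (T' : (ℕ → Bool) → ℕ → Bool) (D : Set (ℕ → Bool)),
        μ Dᶜ = 0 → ContinuousOn T' D →
        (∀ A : Set (ℕ → Bool), MeasurableSet A → μ (D ∩ T' ⁻¹' A) = μ A) →
        ¬ T =ᵐ[μ] T' := by
  obtain rfl := hμ.eq_infinitePi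
  obtain ⟨T, hT, hT_disc⟩ := stmt7_general
    (measurePreserving_infinitePi fun _ : ℕ => measurePreserving_compl_coin) compl_involutive
    fun h => h.exists.elim fun _ => compl_ne_self
  exact ⟨T, hT.measurable, fun A hA => hT.measure_preimage hA.nullMeasurableSet,
    hT_disc T .rfl, fun T' D hD hcont _ hTT' => hT_disc T' hTT'.symm D hD hcont⟩
end

section
/- Let t : List Bool → ℕ satisfy t(x) ≠ t(y) whenever x is a proper prefix of y, and let T be the associated tree process, i.e., the unique map with (T α) n = α (t [T α 0, …, T α (n−1)]) for all α, n. Then for every n, if m is any natural number with t(w) < m for all words w of length at most n, then T α and T β agree on their length-n prefixes whenever α and β agree on their length-m prefixes. Consequently T is uniformly continuous with respect to the standard metric on Cantor space. -/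
open Classical in
/-- The standard metric on Cantor space: `d α β = 2^(-n)` where `n` is the least index
at which `α` and `β` differ, and `d α α = 0`. -/
noncomputable def dC (α β : ℕ → Bool) : ℝ :=
  if α = β then 0 else 2 ^ (-((sInf {n : ℕ | α n ≠ β n} : ℕ) : ℤ))

/-
The output bit `T α n` reads `α` at the label of a node of depth `n`, and that node is the output
prefix `[T α 0, …, T α (n - 1)]`. By strong induction, inputs that agree at every label of depth
less than `n` give the same node at each step, hence the same first `n` outputs. Over a finite
alphabet only finitely many nodes have depth less than `n`, so their labels have a common bound `m`,
and `m` input bits decide `n` output bits; in terms of the metric, this is uniform continuity.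
-/

section TreeProcess

variable {A ι : Type*}

/-- `T` is the tree process of the labeled tree `t`: the node reached after `n` outputs is the word
they form, and its label is the index at which the input is read next. Labels may repeat along a
path. -/
def IsTreeProcess (t : List A → ι) (T : (ι → A) → ℕ → A) : Prop :=
  ∀ α n, T α n = α (t (List.ofFn fun i : Fin n => T α i))

theorem IsTreeProcess.apply_eq_of_forall_length_lt {t : List A → ι} {T : (ι → A) → ℕ → A}
    (hT : IsTreeProcess t T) {n : ℕ} {α β : ι → A}
    (hαβ : ∀ w : List A, w.length < n → α (t w) = β (t w)) :
    ∀ i < n, T α i = T β i := by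
  intro i
  induction i using Nat.strong_induction_on with
  | _ i ih =>
    intro hi
    have same_node : (List.ofFn fun j : Fin i => T α j) = List.ofFn fun j : Fin i => T β j :=
      congrArg List.ofFn (funext fun j => ih j j.2 (j.2.trans hi))
    have depth_lt : (List.ofFn fun j : Fin i => T β j).length < n := by
      rwa [List.length_ofFn]
    rw [hT α i, hT β i, same_node]
    exact hαβ _ depth_lt

theorem IsTreeProcess.apply_eq_of_forall_lt [LT ι] {t : List A → ι} {T : (ι → A) → ℕ → A}
    (hT : IsTreeProcess t T) {n : ℕ} {m : ι} (hm : ∀ w : List A, w.length < n → t w < m)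
    {α β : ι → A} (hαβ : ∀ i < m, α i = β i) :
    ∀ i < n, T α i = T β i :=
  hT.apply_eq_of_forall_length_lt fun w hw => hαβ (t w) (hm w hw)

theorem exists_forall_length_lt_imp_lt [Finite A] [Preorder ι] [IsDirectedOrder ι] [Nonempty ι]
    [NoMaxOrder ι] (t : List A → ι) (n : ℕ) :
    ∃ m, ∀ w : List A, w.length < n → t w < m := by
  obtain ⟨b, hb⟩ := ((List.finite_length_lt A n).image t).bddAbove
  obtain ⟨m, hbm⟩ := exists_gt b
  exact ⟨m, fun w hw => (hb (Set.mem_image_of_mem t hw)).trans_lt hbm⟩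

end TreeProcess

section FirstDifferenceMetric

attribute [local instance] PiNat.dist

variable {E F : ℕ → Type*}

theorem firstDiff_eq_sInf (x y : ∀ n, E n) : PiNat.firstDiff x y = sInf {n | x n ≠ y n} := by
  rcases eq_or_ne x y with rfl | hxy
  · simp [PiNat.firstDiff_def]
  · have hne : {n | x n ≠ y n}.Nonempty := Function.ne_iff.mp hxy
    refine le_antisymm ?_ (Nat.sInf_le (PiNat.apply_firstDiff_ne hxy))
    exact not_lt.mp fun hlt => Nat.sInf_mem hne (PiNat.apply_eq_of_lt_firstDiff hlt)

theorem dC_eq_dist (α β : ℕ → Bool) : dC α β = dist α β := by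
  rcases eq_or_ne α β with rfl | hαβ
  · rw [dC, if_pos rfl, PiNat.dist_self]
  · rw [dC, if_neg hαβ, PiNat.dist_eq_of_ne hαβ, firstDiff_eq_sInf, zpow_neg, zpow_natCast,
      one_div, inv_pow]

theorem exists_pos_forall_dist_lt_of_forall_exists_cylinder {f : (∀ n, E n) → ∀ n, F n}
    (hf : ∀ n, ∃ m, ∀ x y, x ∈ PiNat.cylinder y m → f x ∈ PiNat.cylinder (f y) n)
    {ε : ℝ} (hε : 0 < ε) :
    ∃ δ : ℝ, 0 < δ ∧ ∀ x y, dist x y < δ → dist (f x) (f y) < ε := by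
  obtain ⟨n, hn⟩ := exists_pow_lt_of_lt_one hε (one_half_lt_one : (1 / 2 : ℝ) < 1)
  obtain ⟨m, hm⟩ := hf n
  refine ⟨(1 / 2) ^ m, by positivity, fun x y hxy => ?_⟩
  have inputs_agree : x ∈ PiNat.cylinder y m := PiNat.mem_cylinder_iff_dist_le.mpr hxy.le
  exact (PiNat.mem_cylinder_iff_dist_le.mp (hm x y inputs_agree)).trans_lt hn

theorem stmt14_general {A : Type*} [Finite A] (t : List A → ℕ) (T : (ℕ → A) → ℕ → A)
    (hT : IsTreeProcess t T) :
    (∀ n m : ℕ, (∀ w : List A, w.length < n → t w < m) →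
      ∀ α β : ℕ → A, (∀ i < m, α i = β i) → ∀ i < n, T α i = T β i) ∧
    ∀ ε : ℝ, 0 < ε → ∃ δ : ℝ, 0 < δ ∧
      ∀ α β : ℕ → A, dist α β < δ → dist (T α) (T β) < ε := by
  have prefix_agree : ∀ n m : ℕ, (∀ w : List A, w.length < n → t w < m) →
      ∀ α β : ℕ → A, (∀ i < m, α i = β i) → ∀ i < n, T α i = T β i :=
    fun _ _ hm _ _ hαβ => hT.apply_eq_of_forall_lt hm hαβ
  refine ⟨prefix_agree, fun ε hε => ?_⟩
  refine exists_pos_forall_dist_lt_of_forall_exists_cylinder (fun n => ?_) hε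
  exact (exists_forall_length_lt_imp_lt t n).imp (prefix_agree n)

end FirstDifferenceMetric

/-- For a tree process `T` determined by the labeled tree `t` (no repeated labels along
any path), the first `n` output bits depend only on the first `m` input bits whenever `m`
bounds all labels of nodes of depth at most `n`; consequently `T` is uniformly continuous
for the standard metric on Cantor space. -/
theorem stmt14 (t : List Bool → ℕ) (ht : ∀ x y : List Bool, x <+: y → x ≠ y → t x ≠ t y)
    (T : (ℕ → Bool) → ℕ → Bool)
    (hT : ∀ (α : ℕ → Bool) (n : ℕ), T α n = α (t (List.ofFn fun i : Fin n => T α i.1))) :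
    (∀ n m : ℕ, (∀ w : List Bool, w.length ≤ n → t w < m) →
      ∀ α β : ℕ → Bool, (∀ i < m, α i = β i) → ∀ i < n, T α i = T β i) ∧
    ∀ ε : ℝ, 0 < ε → ∃ δ : ℝ, 0 < δ ∧
      ∀ α β : ℕ → Bool, dC α β < δ → dC (T α) (T β) < ε := by
  obtain ⟨prefix_agree, unif_cont⟩ := stmt14_general t T hT
  exact ⟨fun n m hm => prefix_agree n m fun w hw => hm w hw.le,
    by simpa only [dC_eq_dist] using unif_cont⟩
end

section
/- Let B# = {f : ℕ → Option Bool // ∀ n, f (n+1) ≠ none → f n ≠ none} with the prefix order f ⊑ g iff ∀ n b, f n = some b → g n = some b, equipped with the Scott topology, and ι : (ℕ → Bool) → B#, (ι α) n = some (α n). Let D be a complete lattice that is compactly generated (every element is the supremum of the compact elements below it), equipped with its Scott topology. Then: (i) if f : B# → D is Scott-continuous, then f ∘ ι : (ℕ → Bool) → D is continuous from the product (Cantor) topology to the Scott topology on D; (ii) if g : (ℕ → Bool) → D is continuous from the Cantor topology to the Scott topology on D, then the map G : B# → D defined by G(x) = ⨅ {g α | x ⊑ ι α} is Scott-continuous and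 satisfies G ∘ ι = g. -/
/-- `B#`: the domain of finite and infinite binary strings, modeled as monotone-domain
functions `ℕ → Option Bool` (defined on an initial segment of `ℕ`). -/
def Bsharp : Type := {f : ℕ → Option Bool // ∀ n, f (n + 1) ≠ none → f n ≠ none}

/-- The prefix (information) order on `B#`. -/
instance : PartialOrder Bsharp where
  le f g := ∀ n b, f.1 n = some b → g.1 n = some b
  le_refl _ _ _ h := h
  le_trans _ _ _ hfg hgh n b hb := hgh n b (hfg n b hb)
  le_antisymm f g hfg hgf := by
    apply Subtype.ext
    funext n
    cases hf : f.1 n with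
    | none =>
      cases hg : g.1 n with
      | none => rfl
      | some b =>
        have h2 := hgf n b hg
        rw [hf] at h2
        exact h2
    | some b => exact (hfg n b hf).symm

/-- `B#` carries the Scott topology. -/
instance : TopologicalSpace Bsharp := Topology.scott Bsharp Set.univ

/-- The embedding of Cantor space (infinite binary strings) into `B#`. -/
def iota (α : ℕ → Bool) : Bsharp :=
  ⟨fun n => some (α n), fun n _ => Option.some_ne_none (α n)⟩

/-!
Every infinite string `ι α` is the directed supremum of its finite prefixes, and the strings
extending a given prefix form a clopen cylinder; this makes `ι` continuous.

For the extension, let `x` be a directed supremum of elements `y`. The closed sets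
`{α | y ⊑ ι α}` decrease to `{α | x ⊑ ι α}`, so by compactness of Cantor space every
neighbourhood of the latter contains one of the former. If `G x` lies in the interior of `↑c`, then
`g ⁻¹' ↑c` is such a neighbourhood, whence `c ≤ G y` for some `y`. In a continuous lattice `G x` is
the supremum of these `c`, so `G x ≤ ⨆ G y`. Compactly generated lattices are continuous because
`↑c` is Scott-open when `c` is compact.
-/

open Set Filter Topology

/-- Continuous lattices, in Scott's topological formulation: every `a` is the supremum of the `c`
such that `a` lies in the interior of `↑c` for the Scott topology. It is the condition on `D` under
which the extension of a continuous map by infima is Scott-continuous. For such lattices the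
relation `Ici c ∈ 𝓝 a` coincides with the way-below relation `c ≪ a`. -/
class IsContinuousLattice (D : Type*) [CompleteLattice D] : Prop where
  isLUB_setOf_Ici_mem_nhds_scott (a : D) : IsLUB {c | Ici c ∈ @nhds D (scott D univ) a} a

/-- The extension of `g : X → D` along `e : X → P` sending `p` to the infimum of the values of `g`
at the points whose image lies above `p`; it gives the map `G` from `g` and `ι`. -/
def infExtension {X P D : Type*} [LE P] [InfSet D] (e : X → P) (g : X → D) (p : P) : D :=
  ⨅ a ∈ {a | p ≤ e a}, g a

section ScottTopology

variable {P : Type*} [Preorder P] [TopologicalSpace P] [IsScott P univ]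

theorem nhds_le_nhds_of_le {p q : P} (h : p ≤ q) : 𝓝 q ≤ 𝓝 p :=
  specializes_iff_mem_closure.2 (IsScott.closure_singleton (a := q) ▸ h)

theorem continuous_of_forall_exists_isLUB {X : Type*} [TopologicalSpace X] {e : X → P}
    (h : ∀ a, ∃ s : Set P, s.Nonempty ∧ DirectedOn (· ≤ ·) s ∧ IsLUB s (e a) ∧
      ∀ p ∈ s, ∀ᶠ b in 𝓝 a, p ≤ e b) :
    Continuous e := by
  refine continuous_def.2 fun U hU => isOpen_iff_eventually.2 fun a ha => ?_
  obtain ⟨hupper, hinacc⟩ := (IsScott.isOpen_iff_isUpperSet_and_dirSupInaccOn (D := univ)).1 hU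
  obtain ⟨s, hne, hdir, hlub, hs⟩ := h a
  obtain ⟨p, hps, hpU⟩ := hinacc trivial hne hdir hlub ha
  exact (hs p hps).mono fun b hb => hupper hb hpU

end ScottTopology

theorem isOpen_Ici_of_isCompactElement {D : Type*} [PartialOrder D] [TopologicalSpace D]
    [IsScott D univ] {c : D} (hc : IsCompactElement c) : IsOpen (Ici c) :=
  (IsScott.isOpen_iff_isUpperSet_and_dirSupInaccOn (D := univ)).2
    ⟨isUpperSet_Ici c, fun s _ hne hdir u hu hcu => hc s u hne hdir hu hcu⟩

instance (D : Type*) [CompleteLattice D] [IsCompactlyGenerated D] : IsContinuousLattice D where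
  isLUB_setOf_Ici_mem_nhds_scott a := by
    let : TopologicalSpace D := scott D univ
    have : IsScott D univ := ⟨rfl⟩
    refine ⟨fun c hc => mem_of_mem_nhds hc, fun b hb => le_iff_compact_le_imp.2 fun c hc hca => ?_⟩
    exact hb ((isOpen_Ici_of_isCompactElement hc).mem_nhds hca)

section InfExtension

variable {X P D : Type*} [Preorder P] [CompleteLattice D] {e : X → P} {g : X → D}

theorem le_infExtension_iff {p : P} {c : D} :
    c ≤ infExtension e g p ↔ ∀ a, p ≤ e a → c ≤ g a :=
  le_iInf₂_iff

theorem infExtension_le {p : P} {a : X} (h : p ≤ e a) : infExtension e g p ≤ g a :=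
  iInf₂_le a h

theorem monotone_infExtension : Monotone (infExtension e g) := fun _ _ hpq =>
  le_infExtension_iff.2 fun _ ha => infExtension_le (hpq.trans ha)

theorem infExtension_comp (h : ∀ a b, e a ≤ e b → g a ≤ g b) : infExtension e g ∘ e = g :=
  funext fun a => (infExtension_le le_rfl).antisymm (le_infExtension_iff.2 (h a))

variable [TopologicalSpace X] [CompactSpace X]

theorem exists_forall_mem_of_isLUB (he : ∀ p, IsClosed {a | p ≤ e a}) {s : Set P}
    (hne : s.Nonempty) (hdir : DirectedOn (· ≤ ·) s) {p : P} (hp : IsLUB s p) {U : Set X}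
    (hU : ∀ a, p ≤ e a → U ∈ 𝓝 a) : ∃ q ∈ s, ∀ a, q ≤ e a → a ∈ U := by
  have := hne.to_subtype
  have hanti : Directed (· ⊇ ·) fun q : s => {a | q.1 ≤ e a} := fun q r =>
    have ⟨t, ht, hqt, hrt⟩ := hdir q q.2 r r.2
    ⟨⟨t, ht⟩, fun _ ha => le_trans hqt ha, fun _ ha => le_trans hrt ha⟩
  obtain ⟨⟨q, hq⟩, hqU⟩ := exists_subset_nhds_of_compactSpace hanti (fun q => he q) fun a ha =>
    hU a (hp.2 fun q hq => mem_iInter.1 ha ⟨q, hq⟩)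
  exact ⟨q, hq, hqU⟩

variable [TopologicalSpace D] [IsScott D univ]

theorem exists_le_infExtension (he : ∀ p, IsClosed {a | p ≤ e a}) (hg : Continuous g) {s : Set P}
    (hne : s.Nonempty) (hdir : DirectedOn (· ≤ ·) s) {p : P} (hp : IsLUB s p) {c : D}
    (hc : Ici c ∈ 𝓝 (infExtension e g p)) : ∃ q ∈ s, c ≤ infExtension e g q := by
  have hU : ∀ a, p ≤ e a → g ⁻¹' Ici c ∈ 𝓝 a := fun a ha =>
    hg.continuousAt (nhds_le_nhds_of_le (infExtension_le ha) hc)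
  obtain ⟨q, hq, hqc⟩ := exists_forall_mem_of_isLUB he hne hdir hp hU
  exact ⟨q, hq, le_infExtension_iff.2 hqc⟩

theorem scottContinuous_infExtension [IsContinuousLattice D] (he : ∀ p, IsClosed {a | p ≤ e a})
    (hg : Continuous g) : ScottContinuous (infExtension e g) := by
  intro s hne hdir p hp
  refine ⟨monotone_infExtension.mem_upperBounds_image hp.1, fun b hb => ?_⟩
  have hlub : IsLUB {c | Ici c ∈ 𝓝 (infExtension e g p)} (infExtension e g p) :=
    IsScott.topology_eq D univ ▸ IsContinuousLattice.isLUB_setOf_Ici_mem_nhds_scott _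
  refine hlub.2 fun c hc => ?_
  obtain ⟨q, hq, hcq⟩ := exists_le_infExtension he hg hne hdir hp hc
  exact hcq.trans (hb (mem_image_of_mem _ hq))

end InfExtension

namespace Bsharp

instance : IsScott Bsharp univ := ⟨rfl⟩

/-- The finite prefix of length `n` of an infinite string; these prefixes approximate `iota α`
in `B#`. -/
def prefixOf (α : ℕ → Bool) (n : ℕ) : Bsharp :=
  ⟨fun i => if i < n then some (α i) else none, fun i => by grind⟩

theorem prefixOf_le_iff {α : ℕ → Bool} {n : ℕ} {x : Bsharp} :
    prefixOf α n ≤ x ↔ ∀ i < n, x.1 i = some (α i) :=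
  ⟨fun h i hi => h i (α i) (if_pos hi), fun h i b hb => by
    obtain ⟨hi, hb⟩ := Option.ite_none_right_eq_some.1 hb
    exact (h i hi).trans hb⟩

theorem monotone_prefixOf (α : ℕ → Bool) : Monotone (prefixOf α) := fun _ _ hmn =>
  prefixOf_le_iff.2 fun _ hi => if_pos (hi.trans_le hmn)

theorem le_iota_iff {x : Bsharp} {α : ℕ → Bool} :
    x ≤ iota α ↔ ∀ n b, x.1 n = some b → α n = b :=
  forall₃_congr fun _ _ _ => Option.some_inj

theorem prefixOf_le_iota_iff {α β : ℕ → Bool} {n : ℕ} :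
    prefixOf α n ≤ iota β ↔ β ∈ PiNat.cylinder α n :=
  prefixOf_le_iff.trans (forall₂_congr fun _ _ => Option.some_inj)

theorem iota_le_iota_iff {α β : ℕ → Bool} : iota α ≤ iota β ↔ α = β :=
  ⟨fun h => funext fun n => (le_iota_iff.1 h n (α n) rfl).symm, fun h => h ▸ le_rfl⟩

theorem isLUB_range_prefixOf (α : ℕ → Bool) : IsLUB (range (prefixOf α)) (iota α) := by
  refine ⟨forall_mem_range.2 fun n => prefixOf_le_iota_iff.2 (PiNat.self_mem_cylinder α n), ?_⟩
  intro x hx i b hb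
  have hle : prefixOf α (i + 1) ≤ x := hx (mem_range_self _)
  exact (prefixOf_le_iff.1 hle i i.lt_succ_self).trans hb

theorem continuous_iota : Continuous iota := by
  refine continuous_of_forall_exists_isLUB fun α => ⟨range (prefixOf α), range_nonempty _,
    (monotone_prefixOf α).directed_le.directedOn_range, isLUB_range_prefixOf α,
    forall_mem_range.2 fun n => ?_⟩
  filter_upwards [(PiNat.isOpen_cylinder _ α n).mem_nhds (PiNat.self_mem_cylinder α n)] with β hβ
  exact prefixOf_le_iota_iff.2 hβ

theorem isClosed_setOf_le_iota (x : Bsharp) : IsClosed {α | x ≤ iota α} := by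
  simp only [le_iota_iff, ofPred_forall]
  exact isClosed_iInter fun n => isClosed_iInter fun b => isClosed_iInter fun _ =>
    isClosed_eq (continuous_apply n) continuous_const

end Bsharp

theorem stmt16_general (D : Type*) [CompleteLattice D] [IsContinuousLattice D] :
    (∀ f : Bsharp → D, Continuous[_, scott D univ] f → Continuous[_, scott D univ] (f ∘ iota)) ∧
    ∀ g : (ℕ → Bool) → D, Continuous[_, scott D univ] g →
      Continuous[_, scott D univ] (infExtension iota g) ∧ infExtension iota g ∘ iota = g := by
  let : TopologicalSpace D := scott D univ
  have : IsScott D univ := ⟨rfl⟩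
  refine ⟨fun f hf => hf.comp Bsharp.continuous_iota, fun g hg => ⟨?_, ?_⟩⟩
  · have hG : ScottContinuous (infExtension iota g) :=
      scottContinuous_infExtension Bsharp.isClosed_setOf_le_iota hg
    exact (IsScott.scottContinuousOn_iff_continuous fun _ _ _ => mem_univ _).1
      (scottContinuousOn_univ.2 hG)
  · exact infExtension_comp fun α β h => (congrArg g (Bsharp.iota_le_iota_iff.1 h)).le

/-- Let `D` be a compactly generated complete lattice with its Scott topology. Then
(i) composing a Scott-continuous `f : B# → D` with `ι` yields a map continuous from the
Cantor topology to the Scott topology on `D`; (ii) every `g : ℕ → Bool → D` continuous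
from the Cantor topology to the Scott topology on `D` extends along `ι` to the
Scott-continuous map `x ↦ ⨅ {g α | x ⊑ ι α}`. -/
theorem stmt16 (D : Type*) [CompleteLattice D] [IsCompactlyGenerated D] :
    (∀ f : Bsharp → D,
      @Continuous Bsharp D _ (Topology.scott D Set.univ) f →
      @Continuous (ℕ → Bool) D _ (Topology.scott D Set.univ) (f ∘ iota)) ∧
    ∀ g : (ℕ → Bool) → D,
      @Continuous (ℕ → Bool) D _ (Topology.scott D Set.univ) g →
      @Continuous Bsharp D _ (Topology.scott D Set.univ)
        (fun x : Bsharp => ⨅ α ∈ {α : ℕ → Bool | x ≤ iota α}, g α) ∧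
      (fun x : Bsharp => ⨅ α ∈ {α : ℕ → Bool | x ≤ iota α}, g α) ∘ iota = g :=
  stmt16_general D
end
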